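/- Let M be a positive even integer, a < b real, x_j = a + j(b-a)/M, μ_l = π l/(b-a), k > 0, δ > 0, σ > 0, β ∈ ℝ, and V : ℝ → ℝ. Consider the TSSP scheme for the NLS with linear damping, i.e. the scheme of the previous form with F(s,τ) = δτ and G(s,τ) = β s^σ (1 - e^{-2δστ})/(2δσ): ψ*_j = exp( -kδ/2 + i[ -V(x_j)k/2 + β|ψⁿ_j|^{2σ}(1 - e^{-δσk})/(2δσ) ] ) ψⁿ_j; ψ**_j = ∑_{l=1}^{M-1} e^{-i k μ_l²/2} Û*_l sin(μ_l(x_j - a)) where Û*_l = (2/M)∑_{j=1}^{M-1} ψ*_j sin(μ_l(x_j - a)); ψ^{n+1}_j = exp( -kδ/2 + i[ -V(x_j)k/2 + β|ψ**_j|^{2σ}(1 - e^{-δσk})/(2δσ) ] ) ψ**_j. Then for every n ≥ 0, ‖ψⁿ‖_{l²}² = e^{-2δ n k} ‖ψ⁰‖_{l²}², where ‖U‖_{l²}² = ((b-a)/M) ∑_{j=1}^{M-1} |U_j|². That is, the scheme reproduces exactly the decay rate N(t_n) = e^{-2δ t_n} N(0) of the normalization under linear damping. -/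

import Mathlib

/-!
Multiplication by `exp (-kδ/2 + i·phase)` scales the modulus at every grid point by the constant
`e^{-kδ/2}`, whatever the real phase is, so the two half-steps contribute `e^{-2δk}` to the squared
norm. The spectral step preserves the squared norm: the matrix `sin (π l j / M)`, `1 ≤ l, j ≤ M - 1`,
has orthogonal rows and columns of squared length `M/2` (`sum_sin_mul_sin`), so by Parseval
(`sum_norm_sq_of_orthogonal`) the forward transform with its prefactor `2/M` and the inverse
transform scale the squared norm by `(2/M)² · M/2` and `M/2`, whose product is `1`, while the
multipliers `e^{-ikμ²/2}` in between are unimodular. The theorem follows by induction on `n`.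
-/

open Real Finset

/-- Dirichlet-kernel identity, proved by telescoping. -/
lemma two_sin_half_mul_sum_cos (θ : ℝ) (M : ℕ) :
    2 * sin (θ / 2) * ∑ j ∈ range M, cos (j * θ) = sin ((M - 1 / 2) * θ) + sin (θ / 2) := by
  induction M with
  | zero =>
    have : ((0 : ℕ) - 1 / 2 : ℝ) * θ = -(θ / 2) := by push_cast; ring
    rw [this, sin_neg]; simp
  | succ n ih =>
    rw [sum_range_succ, mul_add, ih]
    have h1 : ((n + 1 : ℕ) - 1 / 2 : ℝ) * θ = n * θ + θ / 2 := by push_cast; ring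
    have h2 : (n - 1 / 2 : ℝ) * θ = n * θ - θ / 2 := by ring
    rw [h1, h2, sin_add, sin_sub]
    ring

lemma sum_cos_int (M : ℕ) (p : ℤ) (hp : p ≠ 0) (hpM : |p| < 2 * M) :
    ∑ j ∈ range M, cos (j * (π * p / M)) = (1 - (-1) ^ p) / 2 := by
  have hM0 : 0 < (M : ℤ) := by have := abs_nonneg p; omega
  have hM : (M : ℝ) ≠ 0 := by
    have : (0 : ℝ) < M := by exact_mod_cast hM0
    exact this.ne'
  have hs : sin (π * p / M / 2) ≠ 0 := by
    intro h
    obtain ⟨n, hn⟩ := sin_eq_zero_iff.mp h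
    have h2 : (p : ℝ) = 2 * M * n := by
      have := pi_ne_zero
      field_simp at hn
      linarith
    have h3 : p = 2 * M * n := by exact_mod_cast h2
    have hn0 : n ≠ 0 := by rintro rfl; simp at h3; exact hp h3
    have : 1 ≤ |n| := Int.one_le_abs hn0
    rw [h3, abs_mul, abs_of_pos (by omega)] at hpM
    nlinarith
  have h := two_sin_half_mul_sum_cos (π * p / M) M
  have e : (M - 1 / 2 : ℝ) * (π * p / M) = p * π - π * p / M / 2 := by field_simp
  rw [e, sin_int_mul_pi_sub] at h
  apply mul_left_cancel₀ (mul_ne_zero two_ne_zero hs)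
  rw [h]
  ring

/-- Discrete orthogonality of the sine modes on the interior grid points. -/
lemma sum_sin_mul_sin (M l m : ℕ) (hl : l ∈ Icc 1 (M - 1)) (hm : m ∈ Icc 1 (M - 1)) :
    ∑ j ∈ Icc 1 (M - 1), sin (π * l * j / M) * sin (π * m * j / M)
      = if l = m then (M / 2 : ℝ) else 0 := by
  rw [mem_Icc] at hl hm
  have hsub : Icc 1 (M - 1) ⊆ range M := by
    intro j hj
    rw [mem_Icc] at hj
    rw [mem_range]
    omega
  -- The term `j = 0` vanishes, so the sum may be extended to `range M`.
  have hext : ∑ j ∈ Icc 1 (M - 1), sin (π * l * j / M) * sin (π * m * j / M)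
      = ∑ j ∈ range M, sin (π * l * j / M) * sin (π * m * j / M) := by
    apply sum_subset hsub
    intro j hj hj'
    rw [mem_range] at hj
    rw [mem_Icc] at hj'
    obtain rfl : j = 0 := by omega
    simp
  have hprod : ∀ j ∈ range M, sin (π * l * j / M) * sin (π * m * j / M)
      = (cos (j * (π * ((l - m : ℤ) : ℝ) / M)) - cos (j * (π * ((l + m : ℤ) : ℝ) / M))) / 2 := by
    intro j _
    have h1 : j * (π * ((l - m : ℤ) : ℝ) / M) = π * l * j / M - π * m * j / M := by
      push_cast; ring
    have h2 : j * (π * ((l + m : ℤ) : ℝ) / M) = π * l * j / M + π * m * j / M := by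
      push_cast; ring
    rw [h1, h2, cos_sub, cos_add]
    ring
  rw [hext, sum_congr rfl hprod, ← sum_div, sum_sub_distrib,
    sum_cos_int M (l + m) (by omega) (by rw [abs_lt]; omega)]
  split_ifs with h
  · subst h
    have : ((-1 : ℝ)) ^ ((l : ℤ) + l) = 1 := Even.neg_one_zpow ⟨_, rfl⟩
    simp [this]
  · rw [sum_cos_int M (l - m) (by omega) (by rw [abs_lt]; omega)]
    -- `l - m` and `l + m` have the same parity.
    have : ((-1 : ℝ)) ^ ((l : ℤ) + m) = (-1) ^ ((l : ℤ) - m) := by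
      have e : (l : ℤ) + m = (l - m) + (m + m) := by ring
      rw [e, zpow_add₀ (by norm_num), Even.neg_one_zpow (⟨_, rfl⟩ : Even ((m : ℤ) + m)), mul_one]
    rw [this]
    ring

/-- Parseval's identity for a real kernel with orthogonal rows of equal squared length `C`. -/
lemma sum_norm_sq_of_orthogonal (s : Finset ℕ) (S : ℕ → ℕ → ℝ) (C : ℝ)
    (hS : ∀ l ∈ s, ∀ m ∈ s, ∑ j ∈ s, S l j * S m j = if l = m then C else 0) (c : ℕ → ℂ) :
    ∑ j ∈ s, ‖∑ l ∈ s, c l * (S l j : ℂ)‖ ^ 2 = C * ∑ l ∈ s, ‖c l‖ ^ 2 := by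
  have key : ∑ j ∈ s, (∑ l ∈ s, c l * (S l j : ℂ)) * (starRingEnd ℂ) (∑ l ∈ s, c l * (S l j : ℂ))
      = C * ∑ l ∈ s, c l * (starRingEnd ℂ) (c l) := by
    calc _ = ∑ j ∈ s, ∑ l ∈ s, ∑ m ∈ s,
          c l * (starRingEnd ℂ) (c m) * ((S l j * S m j : ℝ) : ℂ) := by
          refine sum_congr rfl fun j _ => ?_
          rw [map_sum, sum_mul_sum]
          refine sum_congr rfl fun l _ => sum_congr rfl fun m _ => ?_
          rw [map_mul, Complex.conj_ofReal]
          push_cast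
          ring
      _ = ∑ l ∈ s, ∑ m ∈ s,
          c l * (starRingEnd ℂ) (c m) * ((∑ j ∈ s, S l j * S m j : ℝ) : ℂ) := by
          rw [sum_comm]
          refine sum_congr rfl fun l _ => ?_
          rw [sum_comm]
          refine sum_congr rfl fun m _ => ?_
          rw [Complex.ofReal_sum, mul_sum]
      _ = ∑ l ∈ s, c l * (starRingEnd ℂ) (c l) * C := by
          refine sum_congr rfl fun l hl => ?_
          rw [sum_eq_single_of_mem l hl, hS l hl l hl, if_pos rfl]
          intro m hm hml
          rw [hS l hl m hm, if_neg hml.symm]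
          simp
      _ = _ := by rw [← sum_mul, mul_comm]
  simp only [Complex.mul_conj'] at key
  exact_mod_cast key

lemma norm_exp_add_I_mul (r t : ℝ) : ‖Complex.exp ((r : ℂ) + Complex.I * (t : ℂ))‖ = Real.exp r := by
  rw [Complex.norm_exp]
  simp

/-- The TSSP scheme for the NLS with linear damping g ≡ δ reproduces exactly the
continuous decay rate of the normalization: ‖ψⁿ‖_{l²}² = e^{-2δnk} ‖ψ⁰‖_{l²}². -/
theorem stmt19 (M : ℕ) (hM : 0 < M) (hMeven : Even M)
    (a b : ℝ) (hab : a < b) (k : ℝ) (hk : 0 < k)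
    (δ σ β : ℝ) (hδ : 0 < δ) (hσ : 0 < σ)
    (V : ℝ → ℝ)
    (x : ℕ → ℝ) (hx : ∀ j : ℕ, x j = a + j * ((b - a) / M))
    (μ : ℕ → ℝ) (hμ : ∀ l : ℕ, μ l = π * l / (b - a))
    (ψ ψs ψss Uhat : ℕ → ℕ → ℂ)
    (hbc : ∀ n : ℕ, ψ n 0 = 0 ∧ ψ n M = 0)
    (hstar : ∀ n : ℕ, ∀ j ∈ Finset.Icc 1 (M - 1),
      ψs n j = Complex.exp ((-(k * δ) / 2 : ℝ) +
          Complex.I * ((-V (x j) * k / 2 +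
            β * ‖ψ n j‖ ^ (2 * σ) * (1 - Real.exp (-(δ * σ * k))) / (2 * δ * σ) : ℝ) : ℂ)) *
        ψ n j)
    (hhat : ∀ n : ℕ, ∀ l ∈ Finset.Icc 1 (M - 1),
      Uhat n l = (2 / M : ℂ) *
        ∑ j ∈ Finset.Icc 1 (M - 1), ψs n j * (Real.sin (μ l * (x j - a)) : ℂ))
    (hss : ∀ n : ℕ, ∀ j ∈ Finset.Icc 1 (M - 1),
      ψss n j = ∑ l ∈ Finset.Icc 1 (M - 1),
        Complex.exp (-Complex.I * ((k * μ l ^ 2 / 2 : ℝ) : ℂ)) * Uhat n l *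
          (Real.sin (μ l * (x j - a)) : ℂ))
    (hnext : ∀ n : ℕ, ∀ j ∈ Finset.Icc 1 (M - 1),
      ψ (n + 1) j = Complex.exp ((-(k * δ) / 2 : ℝ) +
          Complex.I * ((-V (x j) * k / 2 +
            β * ‖ψss n j‖ ^ (2 * σ) * (1 - Real.exp (-(δ * σ * k))) / (2 * δ * σ) : ℝ) : ℂ)) *
        ψss n j) :
    ∀ n : ℕ,
      ((b - a) / M) * ∑ j ∈ Finset.Icc 1 (M - 1), ‖ψ n j‖ ^ 2 =
        Real.exp (-2 * δ * (n * k)) *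
          (((b - a) / M) * ∑ j ∈ Finset.Icc 1 (M - 1), ‖ψ 0 j‖ ^ 2) := by
  have hM0 : (M : ℝ) ≠ 0 := by exact_mod_cast hM.ne'
  have hba : b - a ≠ 0 := by linarith
  have harg : ∀ l j : ℕ, μ l * (x j - a) = π * l * j / M := by
    intro l j
    rw [hx, hμ]
    field_simp
    ring
  simp only [harg] at hhat hss
  have hstep : ∀ n : ℕ, ∑ j ∈ Finset.Icc 1 (M - 1), ‖ψ (n + 1) j‖ ^ 2
      = Real.exp (-2 * δ * k) * ∑ j ∈ Finset.Icc 1 (M - 1), ‖ψ n j‖ ^ 2 := by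
    intro n
    have h1 : ∑ j ∈ Finset.Icc 1 (M - 1), ‖ψs n j‖ ^ 2
        = Real.exp (-(k * δ) / 2) ^ 2 * ∑ j ∈ Finset.Icc 1 (M - 1), ‖ψ n j‖ ^ 2 := by
      rw [mul_sum]
      refine sum_congr rfl fun j hj => ?_
      rw [hstar n j hj, norm_mul, norm_exp_add_I_mul, mul_pow]
    have h4 : ∑ j ∈ Finset.Icc 1 (M - 1), ‖ψ (n + 1) j‖ ^ 2
        = Real.exp (-(k * δ) / 2) ^ 2 * ∑ j ∈ Finset.Icc 1 (M - 1), ‖ψss n j‖ ^ 2 := by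
      rw [mul_sum]
      refine sum_congr rfl fun j hj => ?_
      rw [hnext n j hj, norm_mul, norm_exp_add_I_mul, mul_pow]
    have h2 : ∑ l ∈ Finset.Icc 1 (M - 1), ‖Uhat n l‖ ^ 2
        = (2 / M) ^ 2 * (M / 2 * ∑ j ∈ Finset.Icc 1 (M - 1), ‖ψs n j‖ ^ 2) := by
      rw [← sum_norm_sq_of_orthogonal (Icc 1 (M - 1)) (fun j l => sin (π * l * j / M)) (M / 2)
        (fun j hj m hm => by
          rw [← sum_sin_mul_sin M j m hj hm]
          exact sum_congr rfl fun i _ => by rw [mul_right_comm π, mul_right_comm π (i : ℝ) m])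
        (ψs n), mul_sum]
      refine sum_congr rfl fun l hl => ?_
      rw [hhat n l hl, norm_mul, mul_pow]
      simp
    have h3 : ∑ j ∈ Finset.Icc 1 (M - 1), ‖ψss n j‖ ^ 2
        = M / 2 * ∑ l ∈ Finset.Icc 1 (M - 1), ‖Uhat n l‖ ^ 2 := by
      have hP := sum_norm_sq_of_orthogonal (Icc 1 (M - 1)) (fun l j => sin (π * l * j / M)) (M / 2)
        (fun l hl m hm => sum_sin_mul_sin M l m hl hm)
        (fun l => Complex.exp (-Complex.I * ((k * μ l ^ 2 / 2 : ℝ) : ℂ)) * Uhat n l)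
      have hu : ∀ l, ‖Complex.exp (-Complex.I * ((k * μ l ^ 2 / 2 : ℝ) : ℂ))‖ = 1 := by
        intro l
        rw [Complex.norm_exp, neg_mul, Complex.neg_re, Complex.I_mul_re, Complex.ofReal_im]
        simp
      simp only [norm_mul (Complex.exp _), hu, one_mul] at hP
      rw [← hP]
      exact sum_congr rfl fun j hj => by rw [hss n j hj]
    have hexp : Real.exp (-2 * δ * k)
        = Real.exp (-(k * δ) / 2) ^ 2 * Real.exp (-(k * δ) / 2) ^ 2 := by
      rw [← pow_add, ← Real.exp_nat_mul]
      congr 1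
      push_cast
      ring
    rw [h4, h3, h2, h1, hexp]
    field_simp
  intro n
  induction n with
  | zero => simp
  | succ n ih =>
    have e : Real.exp (-2 * δ * ((n + 1 : ℕ) * k))
        = Real.exp (-2 * δ * k) * Real.exp (-2 * δ * (n * k)) := by
      rw [← Real.exp_add]
      congr 1
      push_cast
      ring
    rw [hstep, e, mul_left_comm, ih, mul_assoc (Real.exp (-2 * δ * k))]
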